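/- arXiv:1311.7468 — 3 statements merged into one kernel-verified Lean document; each statement's English description precedes it below -/
import Mathlib

section
/- For every Laurent polynomial f over R, all real numbers r, s > 0, and every t ∈ [0,1], the Gauss norms satisfy |f|_{t·r + (1−t)·s} ≤ (|f|_r)^t · (|f|_s)^{1−t}; that is, r ↦ log|f|_r is convex. (For a monomial a·π^i this inequality is an equality.) -/
/-- The `r`-Gauss norm of a Laurent polynomial `f = ∑ i, (f i) π^i` (encoded as a finitely
supported function `ℤ →₀ R`) with respect to the parameter `ω ∈ (0,1)`:
`|f|_r = max_{i ∈ supp f} ‖f i‖ · ω^(r·i)`, with `|0|_r = 0`. -/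
noncomputable def gaussNorm {R : Type*} [NormedCommRing R] (ω : ℝ) (f : ℤ →₀ R) (r : ℝ) : ℝ :=
  ((f.support.sup fun i => (‖f i‖ * ω ^ (r * (i : ℝ))).toNNReal : NNReal) : ℝ)

theorem mul_rpow_convexCombo_eq {c ω a b : ℝ} (hc : 0 ≤ c) (hω : 0 < ω) (hab : a + b = 1)
    (x y : ℝ) :
    c * ω ^ (a * x + b * y) = (c * ω ^ x) ^ a * (c * ω ^ y) ^ b := by
  have hc_split : c = c ^ a * c ^ b := by
    rw [← Real.rpow_add' hc (by simp [hab]), hab, Real.rpow_one]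
  have hω_split : ω ^ (a * x + b * y) = (ω ^ x) ^ a * (ω ^ y) ^ b := by
    rw [Real.rpow_add hω, mul_comm a, mul_comm b, Real.rpow_mul hω.le, Real.rpow_mul hω.le]
  calc c * ω ^ (a * x + b * y)
      = (c ^ a * c ^ b) * ((ω ^ x) ^ a * (ω ^ y) ^ b) := by rw [← hc_split, hω_split]
    _ = (c ^ a * (ω ^ x) ^ a) * (c ^ b * (ω ^ y) ^ b) := mul_mul_mul_comm ..
    _ = (c * ω ^ x) ^ a * (c * ω ^ y) ^ b := by
        rw [Real.mul_rpow hc (by positivity), Real.mul_rpow hc (by positivity)]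

section GaussNorm

variable {R : Type*} [NormedCommRing R] {ω : ℝ}

theorem gaussNorm_nonneg (f : ℤ →₀ R) (r : ℝ) : 0 ≤ gaussNorm ω f r :=
  NNReal.coe_nonneg _

theorem gaussNorm_le_iff {f : ℤ →₀ R} {r C : ℝ} (hC : 0 ≤ C) :
    gaussNorm ω f r ≤ C ↔ ∀ i : ℤ, ‖f i‖ * ω ^ (r * (i : ℝ)) ≤ C := by
  lift C to NNReal using hC
  simp only [gaussNorm, NNReal.coe_le_coe, Finset.sup_le_iff, Real.toNNReal_le_iff_le_coe]
  refine forall_congr' fun i => ⟨fun h => ?_, fun h _ => h⟩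
  by_cases hi : i ∈ f.support
  · exact h hi
  · simp [Finsupp.notMem_support_iff.mp hi]

theorem norm_mul_rpow_le_gaussNorm (f : ℤ →₀ R) (r : ℝ) (i : ℤ) :
    ‖f i‖ * ω ^ (r * (i : ℝ)) ≤ gaussNorm ω f r :=
  (gaussNorm_le_iff (gaussNorm_nonneg f r)).mp le_rfl i

/-- The logarithm of a nonzero monomial's norm is affine in `r`, and `gaussNorm` is a maximum of
monomial norms. -/
theorem gaussNorm_convex_general (hω : 0 < ω) (f : ℤ →₀ R) (r s : ℝ) {a b : ℝ}
    (ha : 0 ≤ a) (hb : 0 ≤ b) (hab : a + b = 1) :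
    gaussNorm ω f (a * r + b * s) ≤ gaussNorm ω f r ^ a * gaussNorm ω f s ^ b := by
  have hr := gaussNorm_nonneg (ω := ω) f r
  have hs := gaussNorm_nonneg (ω := ω) f s
  refine (gaussNorm_le_iff (by positivity)).mpr fun i => ?_
  calc ‖f i‖ * ω ^ ((a * r + b * s) * (i : ℝ))
      = ‖f i‖ * ω ^ (a * (r * i) + b * (s * i)) := by ring_nf
    _ = (‖f i‖ * ω ^ (r * i)) ^ a * (‖f i‖ * ω ^ (s * i)) ^ b :=
        mul_rpow_convexCombo_eq (norm_nonneg _) hω hab _ _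
    _ ≤ gaussNorm ω f r ^ a * gaussNorm ω f s ^ b := by
        gcongr <;> exact norm_mul_rpow_le_gaussNorm f _ i

end GaussNorm

/-- Hadamard three-circles inequality for Gauss norms: for `r, s > 0` and `t ∈ [0,1]`,
`|f|_{t·r + (1−t)·s} ≤ |f|_r^t · |f|_s^(1−t)`; that is, `r ↦ log |f|_r` is convex. -/
theorem gaussNorm_convex {R : Type*} [NormedCommRing R]
    (hna : ∀ x y : R, ‖x + y‖ ≤ max ‖x‖ ‖y‖)
    (ω : ℝ) (hω0 : 0 < ω) (hω1 : ω < 1)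
    (f : ℤ →₀ R) (r s : ℝ) (hr : 0 < r) (hs : 0 < s)
    (t : ℝ) (ht0 : 0 ≤ t) (ht1 : t ≤ 1) :
    gaussNorm ω f (t * r + (1 - t) * s) ≤
      (gaussNorm ω f r) ^ t * (gaussNorm ω f s) ^ (1 - t) :=
  gaussNorm_convex_general hω0 f r s ht0 (sub_nonneg.mpr ht1) (add_sub_cancel t 1)
end

section
/- Let u, v ∈ A satisfy u² = u, ‖u‖ ≥ 1, and ‖v − u‖ < ‖u‖^{-3}. Define a sequence by w₀ = v and w_{l+1} = 3·w_l² − 2·w_l³. Then: (i) ‖v² − v‖ ≤ ‖u‖·‖v − u‖ < ‖u‖^{-2}; and (ii) for every l ≥ 0, ‖w_l − u‖ ≤ ‖u‖²·‖v − u‖ and ‖w_l² − w_l‖ ≤ ‖u‖^{-2}·(‖v² − v‖·‖u‖²)^{2^l}. -/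
/-!
Put `e = w² - w`. The step `w ↦ 3w² - 2w³` moves `w` by `e - 2ew` and replaces `e` by `4e³ - 3e²`.
For an ultrametric norm the integer coefficients are harmless, so once `‖e‖ ≤ 1` each step replaces
`‖e‖` by at most `‖e‖²`, while `w` moves by at most `‖e‖ * max 1 ‖w‖`, too little to leave the ball
of radius `‖u‖² * ‖v - u‖` about the idempotent `u`.
-/

section Algebra

variable {R : Type*} [NonUnitalRing R]

/-- The modified Newton step `w ↦ 3w² - 2w³` for the equation `w² = w`. It is the Newton step
`w - (w² - w) / (2w - 1)` with `2w - 1` in place of its inverse, which is legitimate because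
`(2w - 1)² = 1 + 4(w² - w)`. Natural multiples and products are used instead of numerals and powers
so that no unit is required. -/
def idempotentNewtonStep (x : R) : R :=
  3 • (x * x) - 2 • (x * x * x)

theorem idempotentNewtonStep_sub_self (x : R) :
    idempotentNewtonStep x - x = (x * x - x) - 2 • ((x * x - x) * x) := by
  unfold idempotentNewtonStep
  noncomm_ring

theorem idempotentNewtonStep_mul_self_sub_self (x : R) :
    idempotentNewtonStep x * idempotentNewtonStep x - idempotentNewtonStep x =
      4 • ((x * x - x) * (x * x - x) * (x * x - x)) - 3 • ((x * x - x) * (x * x - x)) := by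
  unfold idempotentNewtonStep
  noncomm_ring

theorem mul_self_sub_self_eq_of_isIdempotentElem {u : R} (hu : IsIdempotentElem u) (v : R) :
    v * v - v = u * (v - u) + (v - u) * v - (v - u) := by
  simp only [mul_sub, sub_mul, hu.eq]
  abel

end Algebra

theorem idempotentNewtonStep_eq {R : Type*} [Ring R] (x : R) :
    idempotentNewtonStep x = 3 * x ^ 2 - 2 * x ^ 3 := by
  simp only [idempotentNewtonStep, nsmul_eq_mul, Nat.cast_ofNat, pow_succ, pow_zero, one_mul]

theorem pow_le_inv_mul_mul_pow {K : Type*} [Field K] [LinearOrder K] [IsStrictOrderedRing K]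
    {a y : K} (ha : 1 ≤ a) (hy : 0 ≤ y) {n : ℕ} (hn : n ≠ 0) : y ^ n ≤ a⁻¹ * (y * a) ^ n := by
  have ha0 : 0 < a := one_pos.trans_le ha
  rw [le_inv_mul_iff₀ ha0, mul_pow, mul_comm]
  gcongr
  exact le_self_pow₀ ha hn

section Ultrametric

open IsUltrametricDist

section NormedGroup

variable {E : Type*} [SeminormedAddCommGroup E] [IsUltrametricDist E]

theorem norm_sub_le_max (x y : E) : ‖x - y‖ ≤ max ‖x‖ ‖y‖ := by
  simpa only [sub_eq_add_neg, norm_neg] using norm_add_le_max x (-y)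

theorem norm_le_of_norm_sub_le {x y : E} (h : ‖x - y‖ ≤ ‖y‖) : ‖x‖ ≤ ‖y‖ := by
  simpa only [sub_add_cancel, max_eq_right h] using norm_add_le_max (x - y) y

end NormedGroup

section Ring

variable {A : Type*} [NonUnitalSeminormedRing A] [IsUltrametricDist A]

theorem norm_idempotentNewtonStep_sub_self_le (x : A) :
    ‖idempotentNewtonStep x - x‖ ≤ ‖x * x - x‖ * max 1 ‖x‖ := by
  rw [idempotentNewtonStep_sub_self, mul_max_of_nonneg _ _ (norm_nonneg _), mul_one]
  exact (norm_sub_le_max _ _).trans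
    (max_le_max_left _ ((norm_nsmul_le _ _).trans (norm_mul_le _ _)))

theorem norm_idempotentNewtonStep_mul_self_sub_self_le {x : A} (hx : ‖x * x - x‖ ≤ 1) :
    ‖idempotentNewtonStep x * idempotentNewtonStep x - idempotentNewtonStep x‖ ≤
      ‖x * x - x‖ ^ 2 := by
  rw [idempotentNewtonStep_mul_self_sub_self]
  set e := x * x - x
  have hsq : ‖e * e‖ ≤ ‖e‖ ^ 2 := (norm_mul_le e e).trans_eq (sq ‖e‖).symm
  have hcube : ‖e * e * e‖ ≤ ‖e‖ ^ 2 :=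
    (norm_mul_le _ _).trans ((mul_le_of_le_one_right (norm_nonneg _) hx).trans hsq)
  exact (norm_sub_le_max _ _).trans
    (max_le ((norm_nsmul_le _ _).trans hcube) ((norm_nsmul_le _ _).trans hsq))

theorem norm_mul_self_sub_self_le {u v : A} (hu : IsIdempotentElem u) (hu1 : 1 ≤ ‖u‖)
    (hv : ‖v‖ ≤ ‖u‖) : ‖v * v - v‖ ≤ ‖u‖ * ‖v - u‖ := by
  rw [mul_self_sub_self_eq_of_isIdempotentElem hu]
  have hleft : ‖u * (v - u)‖ ≤ ‖u‖ * ‖v - u‖ := norm_mul_le _ _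
  have hright : ‖(v - u) * v‖ ≤ ‖u‖ * ‖v - u‖ :=
    (norm_mul_le _ _).trans (by rw [mul_comm]; gcongr)
  have hlinear : ‖v - u‖ ≤ ‖u‖ * ‖v - u‖ := le_mul_of_one_le_left (norm_nonneg _) hu1
  exact (norm_sub_le_max _ _).trans
    (max_le ((norm_add_le_max _ _).trans (max_le hleft hright)) hlinear)

theorem norm_mul_self_sub_self_le_of_idempotentNewtonStep {w : ℕ → A}
    (hw : ∀ l, w (l + 1) = idempotentNewtonStep (w l)) (h0 : ‖w 0 * w 0 - w 0‖ ≤ 1) (l : ℕ) :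
    ‖w l * w l - w l‖ ≤ ‖w 0 * w 0 - w 0‖ ^ 2 ^ l := by
  induction l with
  | zero => rw [pow_zero, pow_one]
  | succ l ih =>
    have hl : ‖w l * w l - w l‖ ≤ 1 := ih.trans (pow_le_one₀ (norm_nonneg _) h0)
    rw [hw, pow_succ 2, pow_mul]
    exact (norm_idempotentNewtonStep_mul_self_sub_self_le hl).trans (by gcongr)

theorem norm_sub_le_of_idempotentNewtonStep {u : A} {w : ℕ → A} {r : ℝ} (hu1 : 1 ≤ ‖u‖)
    (hw : ∀ l, w (l + 1) = idempotentNewtonStep (w l)) (h0 : ‖w 0 * w 0 - w 0‖ ≤ 1)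
    (hdist : ‖w 0 - u‖ ≤ r) (hdefect : ‖w 0 * w 0 - w 0‖ * ‖u‖ ≤ r) (hr : r ≤ ‖u‖) (l : ℕ) :
    ‖w l - u‖ ≤ r := by
  induction l with
  | zero => exact hdist
  | succ l ih =>
    have hwl : ‖w l‖ ≤ ‖u‖ := norm_le_of_norm_sub_le (ih.trans hr)
    have hdefect_le : ‖w l * w l - w l‖ ≤ ‖w 0 * w 0 - w 0‖ :=
      (norm_mul_self_sub_self_le_of_idempotentNewtonStep hw h0 l).trans
        (pow_le_of_le_one (norm_nonneg _) h0 (by positivity))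
    have hmove : ‖w (l + 1) - w l‖ ≤ r :=
      calc ‖w (l + 1) - w l‖ ≤ ‖w l * w l - w l‖ * max 1 ‖w l‖ := by
            rw [hw]; exact norm_idempotentNewtonStep_sub_self_le (w l)
        _ ≤ ‖w 0 * w 0 - w 0‖ * ‖u‖ := by gcongr; exact max_le hu1 hwl
        _ ≤ r := hdefect
    rw [← sub_add_sub_cancel (w (l + 1)) (w l) u]
    exact (norm_add_le_max _ _).trans (max_le hmove ih)

theorem newton_iteration_estimates_general {u : A} {w : ℕ → A} (hu : IsIdempotentElem u)
    (hu1 : 1 ≤ ‖u‖) (hclose : ‖u‖ * ‖w 0 - u‖ ≤ 1)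
    (hw : ∀ l, w (l + 1) = idempotentNewtonStep (w l)) :
    ‖w 0 * w 0 - w 0‖ ≤ ‖u‖ * ‖w 0 - u‖ ∧
    ∀ l, ‖w l - u‖ ≤ ‖u‖ ^ 2 * ‖w 0 - u‖ ∧
      ‖w l * w l - w l‖ ≤ ‖w 0 * w 0 - w 0‖ ^ 2 ^ l := by
  have hdist : ‖w 0 - u‖ ≤ ‖u‖ * ‖w 0 - u‖ := le_mul_of_one_le_left (norm_nonneg _) hu1
  have hdefect : ‖w 0 * w 0 - w 0‖ ≤ ‖u‖ * ‖w 0 - u‖ :=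
    norm_mul_self_sub_self_le hu hu1
      (norm_le_of_norm_sub_le ((hdist.trans hclose).trans hu1))
  have hdefect1 : ‖w 0 * w 0 - w 0‖ ≤ 1 := hdefect.trans hclose
  refine ⟨hdefect, fun l ↦
    ⟨?_, norm_mul_self_sub_self_le_of_idempotentNewtonStep hw hdefect1 l⟩⟩
  apply norm_sub_le_of_idempotentNewtonStep hu1 hw hdefect1
  · exact le_mul_of_one_le_left (norm_nonneg _) (one_le_pow₀ hu1)
  · calc ‖w 0 * w 0 - w 0‖ * ‖u‖ ≤ ‖u‖ * ‖w 0 - u‖ * ‖u‖ := by gcongr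
      _ = ‖u‖ ^ 2 * ‖w 0 - u‖ := by ring
  · calc ‖u‖ ^ 2 * ‖w 0 - u‖ = ‖u‖ * (‖u‖ * ‖w 0 - u‖) := by ring
      _ ≤ ‖u‖ := mul_le_of_le_one_right (norm_nonneg _) hclose

end Ring

end Ultrametric

/-- Estimates for the modified Newton iteration `w ↦ 3w² − 2w³` applied to an approximation
`v` of an idempotent `u` in a (not necessarily commutative) normed ring whose norm is
ultrametric, submultiplicative and satisfies `‖1‖ = 1`. -/
theorem newton_iteration_estimates {A : Type*} [NormedRing A] [NormOneClass A]
    (hna : ∀ x y : A, ‖x + y‖ ≤ max ‖x‖ ‖y‖)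
    (u v : A) (hu : u ^ 2 = u) (hu1 : 1 ≤ ‖u‖) (hv : ‖v - u‖ < ‖u‖ ^ (-3 : ℤ))
    (w : ℕ → A) (hw0 : w 0 = v)
    (hws : ∀ l : ℕ, w (l + 1) = 3 * (w l) ^ 2 - 2 * (w l) ^ 3) :
    (‖v ^ 2 - v‖ ≤ ‖u‖ * ‖v - u‖ ∧ ‖v ^ 2 - v‖ < ‖u‖ ^ (-2 : ℤ)) ∧
    (∀ l : ℕ, ‖w l - u‖ ≤ ‖u‖ ^ 2 * ‖v - u‖ ∧
      ‖(w l) ^ 2 - w l‖ ≤ ‖u‖ ^ (-2 : ℤ) * (‖v ^ 2 - v‖ * ‖u‖ ^ 2) ^ (2 ^ l)) := by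
  have : IsUltrametricDist A :=
    IsUltrametricDist.isUltrametricDist_of_forall_norm_add_le_max_norm hna
  subst hw0
  have hu0 : 0 < ‖u‖ := one_pos.trans_le hu1
  have hsmall : ‖u‖ * ‖w 0 - u‖ < ‖u‖ ^ (-2 : ℤ) :=
    calc ‖u‖ * ‖w 0 - u‖ < ‖u‖ * ‖u‖ ^ (-3 : ℤ) := by gcongr
      _ = ‖u‖ ^ (-2 : ℤ) := (zpow_one_add₀ hu0.ne' _).symm
  obtain ⟨hdefect, hiter⟩ := newton_iteration_estimates_general (w := w)
    ((sq u).symm.trans hu) hu1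
    (hsmall.le.trans (zpow_le_one_of_nonpos₀ hu1 (by decide)))
    fun l ↦ (hws l).trans (idempotentNewtonStep_eq _).symm
  simp only [← sq] at hdefect hiter
  refine ⟨⟨hdefect, hdefect.trans_lt hsmall⟩, fun l ↦ ⟨(hiter l).1, (hiter l).2.trans ?_⟩⟩
  exact pow_le_inv_mul_mul_pow (one_le_pow₀ hu1) (norm_nonneg _) (by positivity)
end

section
/- Assume in addition that A is complete. Let u, v ∈ A satisfy u² = u, ‖u‖ ≥ 1, and ‖v − u‖ < ‖u‖^{-3}, and define w₀ = v, w_{l+1} = 3·w_l² − 2·w_l³. Then the sequence (w_l) converges to an element w ∈ A satisfying w² = w and ‖w − u‖ ≤ ‖u‖²·‖v − u‖ (in particular ‖w − u‖ < ‖u‖^{-1}). -/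
open Filter

/-!
Measure how far `w` is from being idempotent by its defect `e = w² - w`, and write
`N w = 3w² - 2w³`. Then `N w - w = e - 2we`, while the defect of `N w` is `4e³ - 3e²`. In an
ultrametric norm integer coefficients cost nothing, so if the starting point `v` has defect `e` with
`‖e‖ < 1`, then the defect shrinks quadratically along the iteration and no iterate is further
than `max 1 ‖v‖ * ‖e‖` from `v`. Near an idempotent `u` one has `‖v‖ ≤ ‖u‖` and
`‖e‖ ≤ ‖u‖ * ‖v - u‖`, whence the factor `‖u‖²` in the final estimate.
-/

open Topology

open IsUltrametricDist (norm_add_le_max norm_nsmul_le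
  isUltrametricDist_of_forall_norm_add_le_max_norm)

section Algebra

variable {A : Type*} [NonUnitalRing A]

/-- The failure `w² - w` of `w` to be idempotent: the residual that Newton's method drives to
zero. -/
def idempotentDefect (w : A) : A := w * w - w

/-- One step `w ↦ 3w² - 2w³` of the modified Newton iteration for the equation `w² = w`. Integer
multiples are scalar multiples, so that no unit is required. -/
def newtonStep (w : A) : A := 3 • (w * w) - 2 • (w * w * w)

theorem idempotentDefect_eq_zero_iff {w : A} : idempotentDefect w = 0 ↔ IsIdempotentElem w :=
  sub_eq_zero

theorem idempotentDefect_eq_of_isIdempotentElem {u : A} (hu : IsIdempotentElem u) (v : A) :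
    idempotentDefect v = u * (v - u) + (v - u) * v - (v - u) := by
  simp only [idempotentDefect, mul_sub, sub_mul, hu.eq]
  abel

theorem newtonStep_sub_self (w : A) :
    newtonStep w - w = idempotentDefect w - 2 • (w * idempotentDefect w) := by
  simp only [newtonStep, idempotentDefect]
  noncomm_ring

theorem idempotentDefect_newtonStep (w : A) :
    idempotentDefect (newtonStep w) =
      4 • (idempotentDefect w * idempotentDefect w * idempotentDefect w) -
        3 • (idempotentDefect w * idempotentDefect w) := by
  simp only [newtonStep, idempotentDefect]
  noncomm_ring

end Algebra
section Ultrametric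

theorem norm_sub_le_max_norm {E : Type*} [SeminormedAddGroup E] [IsUltrametricDist E]
    (x y : E) : ‖x - y‖ ≤ max ‖x‖ ‖y‖ := by
  simpa [sub_eq_add_neg] using norm_add_le_max x (-y)

variable {A : Type*} [NonUnitalSeminormedRing A] [IsUltrametricDist A]

theorem norm_idempotentDefect_le_of_isIdempotentElem {u : A} (hu : IsIdempotentElem u) (v : A) :
    ‖idempotentDefect v‖ ≤ max (max ‖u‖ ‖v‖) 1 * ‖v - u‖ := by
  have hright : ‖(v - u) * v‖ ≤ ‖v‖ * ‖v - u‖ := (norm_mul_le _ _).trans_eq (mul_comm _ _)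
  rw [idempotentDefect_eq_of_isIdempotentElem hu, max_mul_of_nonneg _ _ (norm_nonneg _),
    max_mul_of_nonneg _ _ (norm_nonneg _), one_mul]
  exact (norm_sub_le_max_norm _ _).trans <| max_le_max_right _ <|
    (norm_add_le_max _ _).trans (max_le_max (norm_mul_le _ _) hright)

theorem norm_newtonStep_sub_self_le (w : A) :
    ‖newtonStep w - w‖ ≤ max 1 ‖w‖ * ‖idempotentDefect w‖ := by
  rw [newtonStep_sub_self, max_mul_of_nonneg _ _ (norm_nonneg _), one_mul]
  exact (norm_sub_le_max_norm _ _).trans <| max_le_max_left _ <|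
    (norm_nsmul_le _ _).trans (norm_mul_le _ _)

theorem norm_newtonStep_le {w : A} (hw : ‖idempotentDefect w‖ ≤ 1) :
    ‖newtonStep w‖ ≤ max 1 ‖w‖ := by
  have hmove : ‖newtonStep w - w‖ ≤ max 1 ‖w‖ :=
    (norm_newtonStep_sub_self_le w).trans (mul_le_of_le_one_right (by positivity) hw)
  calc ‖newtonStep w‖ = ‖newtonStep w - w + w‖ := by rw [sub_add_cancel]
    _ ≤ max ‖newtonStep w - w‖ ‖w‖ := norm_add_le_max _ _
    _ ≤ max 1 ‖w‖ := max_le hmove (le_max_right _ _)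

theorem norm_idempotentDefect_newtonStep_le {w : A} (hw : ‖idempotentDefect w‖ ≤ 1) :
    ‖idempotentDefect (newtonStep w)‖ ≤ ‖idempotentDefect w‖ ^ 2 := by
  have hsq : ‖idempotentDefect w * idempotentDefect w‖ ≤ ‖idempotentDefect w‖ ^ 2 :=
    (norm_mul_le _ _).trans_eq (pow_two _).symm
  have hcube : ‖idempotentDefect w * idempotentDefect w * idempotentDefect w‖ ≤
      ‖idempotentDefect w‖ ^ 2 :=
    (norm_mul_le _ _).trans <| (mul_le_of_le_one_right (norm_nonneg _) hw).trans hsq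
  rw [idempotentDefect_newtonStep]
  exact (norm_sub_le_max_norm _ _).trans <|
    max_le ((norm_nsmul_le _ _).trans hcube) ((norm_nsmul_le _ _).trans hsq)

variable {v : A} (hv : ‖idempotentDefect v‖ ≤ 1)
include hv

theorem norm_idempotentDefect_iterate_newtonStep_le (l : ℕ) :
    ‖idempotentDefect (newtonStep^[l] v)‖ ≤ ‖idempotentDefect v‖ ^ 2 ^ l := by
  induction l with
  | zero => simp
  | succ l ih =>
    rw [Function.iterate_succ_apply', pow_succ, pow_mul]
    exact (norm_idempotentDefect_newtonStep_le (ih.trans (pow_le_one₀ (norm_nonneg _) hv))).trans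
      (pow_le_pow_left₀ (norm_nonneg _) ih 2)

theorem norm_idempotentDefect_iterate_newtonStep_le_one (l : ℕ) :
    ‖idempotentDefect (newtonStep^[l] v)‖ ≤ 1 :=
  (norm_idempotentDefect_iterate_newtonStep_le hv l).trans (pow_le_one₀ (norm_nonneg _) hv)

theorem norm_iterate_newtonStep_le (l : ℕ) : ‖newtonStep^[l] v‖ ≤ max 1 ‖v‖ := by
  induction l with
  | zero => simp
  | succ l ih =>
    rw [Function.iterate_succ_apply']
    exact (norm_newtonStep_le (norm_idempotentDefect_iterate_newtonStep_le_one hv l)).trans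
      (max_le (le_max_left _ _) ih)

theorem norm_iterate_newtonStep_succ_sub_le (l : ℕ) :
    ‖newtonStep^[l + 1] v - newtonStep^[l] v‖ ≤ max 1 ‖v‖ * ‖idempotentDefect v‖ ^ 2 ^ l := by
  rw [Function.iterate_succ_apply']
  refine (norm_newtonStep_sub_self_le _).trans ?_
  gcongr ?_ * ?_
  · exact max_le (le_max_left _ _) (norm_iterate_newtonStep_le hv l)
  · exact norm_idempotentDefect_iterate_newtonStep_le hv l

theorem norm_iterate_newtonStep_sub_le (l : ℕ) :
    ‖newtonStep^[l] v - v‖ ≤ max 1 ‖v‖ * ‖idempotentDefect v‖ := by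
  induction l with
  | zero => simp
  | succ l ih =>
    have hmove : ‖newtonStep^[l + 1] v - newtonStep^[l] v‖ ≤
        max 1 ‖v‖ * ‖idempotentDefect v‖ := by
      refine (norm_iterate_newtonStep_succ_sub_le hv l).trans ?_
      gcongr
      exact pow_le_of_le_one (norm_nonneg _) hv (by positivity)
    rw [← sub_add_sub_cancel _ (newtonStep^[l] v)]
    exact (norm_add_le_max _ _).trans (max_le hmove ih)

end Ultrametric

section Convergence

theorem continuous_idempotentDefect {A : Type*} [NonUnitalRing A] [TopologicalSpace A]
    [IsTopologicalRing A] : Continuous (idempotentDefect : A → A) := by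
  unfold idempotentDefect
  fun_prop

section Seminormed

variable {A : Type*} [NonUnitalSeminormedRing A] [IsUltrametricDist A] {v : A}
  (hv : ‖idempotentDefect v‖ < 1)
include hv

theorem cauchySeq_iterate_newtonStep : CauchySeq fun l ↦ newtonStep^[l] v := by
  refine cauchySeq_of_le_geometric ‖idempotentDefect v‖ (max 1 ‖v‖) hv fun l ↦ ?_
  rw [dist_comm, dist_eq_norm]
  refine (norm_iterate_newtonStep_succ_sub_le hv.le l).trans ?_
  gcongr ?_ * ?_
  exact pow_le_pow_of_le_one (norm_nonneg _) hv.le Nat.lt_two_pow_self.le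

theorem tendsto_idempotentDefect_iterate_newtonStep :
    Tendsto (fun l ↦ idempotentDefect (newtonStep^[l] v)) atTop (𝓝 0) :=
  squeeze_zero_norm (norm_idempotentDefect_iterate_newtonStep_le hv.le) <|
    (tendsto_pow_atTop_nhds_zero_of_lt_one (norm_nonneg _) hv).comp
      (tendsto_pow_atTop_atTop_of_one_lt one_lt_two)

end Seminormed

variable {A : Type*} [NonUnitalNormedRing A] [IsUltrametricDist A] [CompleteSpace A]

theorem exists_tendsto_iterate_newtonStep {v : A} (hv : ‖idempotentDefect v‖ < 1) :
    ∃ e : A, Tendsto (fun l ↦ newtonStep^[l] v) atTop (𝓝 e) ∧ IsIdempotentElem e ∧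
      ‖e - v‖ ≤ max 1 ‖v‖ * ‖idempotentDefect v‖ := by
  obtain ⟨e, he⟩ := cauchySeq_tendsto_of_complete (cauchySeq_iterate_newtonStep hv)
  refine ⟨e, he, idempotentDefect_eq_zero_iff.mp ?_, ?_⟩
  · exact tendsto_nhds_unique ((continuous_idempotentDefect.tendsto e).comp he)
      (tendsto_idempotentDefect_iterate_newtonStep hv)
  · exact le_of_tendsto' (he.sub_const v).norm (norm_iterate_newtonStep_sub_le hv.le)

theorem newton_iteration_converges_general {u : A} (hu : IsIdempotentElem u) (hu1 : 1 ≤ ‖u‖)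
    {w : ℕ → A} (hw0 : ‖u‖ * ‖w 0 - u‖ < 1) (hws : ∀ l, w (l + 1) = newtonStep (w l)) :
    ∃ e : A, Tendsto w atTop (𝓝 e) ∧ IsIdempotentElem e ∧ ‖e - u‖ ≤ ‖u‖ ^ 2 * ‖w 0 - u‖ := by
  have hiter : w = fun l ↦ newtonStep^[l] (w 0) := by
    funext l
    induction l with
    | zero => rfl
    | succ l ih => rw [hws, ih, Function.iterate_succ_apply']
  have hdist : ‖w 0 - u‖ ≤ ‖u‖ * ‖w 0 - u‖ := le_mul_of_one_le_left (norm_nonneg _) hu1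
  have hnorm : ‖w 0‖ ≤ ‖u‖ := by
    simpa [hdist.trans (hw0.le.trans hu1)] using norm_add_le_max (w 0 - u) u
  have hdefect : ‖idempotentDefect (w 0)‖ ≤ ‖u‖ * ‖w 0 - u‖ := by
    simpa [hnorm, hu1] using norm_idempotentDefect_le_of_isIdempotentElem hu (w 0)
  obtain ⟨e, htendsto, he, hmove⟩ := exists_tendsto_iterate_newtonStep (hdefect.trans_lt hw0)
  refine ⟨e, hiter ▸ htendsto, he, ?_⟩
  rw [← sub_add_sub_cancel e (w 0) u, pow_two, mul_assoc]
  refine (norm_add_le_max _ _).trans (max_le (hmove.trans ?_) (hdist.trans ?_))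
  · gcongr
    exact max_le hu1 hnorm
  · exact le_mul_of_one_le_left (by positivity) hu1

end Convergence

/-- In a complete (not necessarily commutative) normed ring with ultrametric
submultiplicative norm and `‖1‖ = 1`, the modified Newton iteration `w ↦ 3w² − 2w³`
started at an approximation `v` of an idempotent `u` (with `‖v − u‖ < ‖u‖⁻³`) converges
to an idempotent `w` with `‖w − u‖ ≤ ‖u‖² · ‖v − u‖ < ‖u‖⁻¹`. -/
theorem newton_iteration_converges {A : Type*} [NormedRing A] [NormOneClass A]
    [CompleteSpace A]
    (hna : ∀ x y : A, ‖x + y‖ ≤ max ‖x‖ ‖y‖)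
    (u v : A) (hu : u ^ 2 = u) (hu1 : 1 ≤ ‖u‖) (hv : ‖v - u‖ < ‖u‖ ^ (-3 : ℤ))
    (w : ℕ → A) (hw0 : w 0 = v)
    (hws : ∀ l : ℕ, w (l + 1) = 3 * (w l) ^ 2 - 2 * (w l) ^ 3) :
    ∃ wlim : A, Tendsto w atTop (nhds wlim) ∧ wlim ^ 2 = wlim ∧
      ‖wlim - u‖ ≤ ‖u‖ ^ 2 * ‖v - u‖ ∧ ‖wlim - u‖ < ‖u‖ ^ (-1 : ℤ) := by
  have : IsUltrametricDist A := isUltrametricDist_of_forall_norm_add_le_max_norm hna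
  subst hw0
  have : 0 < ‖u‖ := one_pos.trans_le hu1
  have hsmall : ‖u‖ ^ 2 * ‖w 0 - u‖ < ‖u‖ ^ (-1 : ℤ) := by
    calc ‖u‖ ^ 2 * ‖w 0 - u‖ < ‖u‖ ^ 2 * ‖u‖ ^ (-3 : ℤ) := by gcongr
      _ = ‖u‖ ^ (-1 : ℤ) := by field_simp
  have hclose : ‖u‖ * ‖w 0 - u‖ < 1 := by
    calc ‖u‖ * ‖w 0 - u‖ ≤ ‖u‖ ^ 2 * ‖w 0 - u‖ := by gcongr; exact le_self_pow₀ hu1 two_ne_zero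
      _ < ‖u‖ ^ (-1 : ℤ) := hsmall
      _ ≤ 1 := zpow_le_one_of_nonpos₀ hu1 (by norm_num)
  obtain ⟨e, htendsto, he, hdist⟩ := newton_iteration_converges_general
    ((pow_two u).symm.trans hu) hu1 hclose fun l ↦ by rw [hws, newtonStep]; noncomm_ring
  exact ⟨e, htendsto, (pow_two e).trans he, hdist, hdist.trans_lt hsmall⟩
end
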